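/- arXiv:1207.4047 — 3 statements merged into one kernel-verified Lean document; each statement's English description precedes it below -/
import Mathlib

section
/- Let x be a proper rational parametrization (of an infinite rational curve C ⊆ ℝⁿ), and let φ₁ and φ₂ be real Möbius transformations such that x(φ₁(t)) = x(φ₂(t)) for all but finitely many t ∈ ℝ (all four expressions being defined). Then φ₁ and φ₂ are equal as maps, i.e., φ₁(t) = φ₂(t) for every t at which both are defined. -/
open Polynomial Matrix RealInnerProductSpace

noncomputable section

/-- A rational parametrization of a curve in `ℝⁿ`: components `pᵢ/qᵢ` with `qᵢ ≠ 0` and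
`gcd(pᵢ, qᵢ) = 1`. -/
structure RatParam (n : ℕ) where
  p : Fin n → Polynomial ℝ
  q : Fin n → Polynomial ℝ
  q_ne_zero : ∀ i, q i ≠ 0
  coprime : ∀ i, IsCoprime (p i) (q i)

namespace RatParam

variable {n : ℕ}

/-- The (cofinite) set of parameters where the parametrization is defined. -/
def domain (X : RatParam n) : Set ℝ := {t | ∀ i, (X.q i).eval t ≠ 0}

/-- The value of the parametrization at a parameter `t`. -/
def eval (X : RatParam n) (t : ℝ) : EuclideanSpace ℝ (Fin n) :=
  WithLp.toLp 2 fun i => (X.p i).eval t / (X.q i).eval t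

/-- The associated rational curve: the image of the parametrization over its domain. -/
def curve (X : RatParam n) : Set (EuclideanSpace ℝ (Fin n)) := X.eval '' X.domain

/-- A parametrization is proper if it is injective outside some finite set of parameters. -/
def Proper (X : RatParam n) : Prop :=
  ∃ F : Set ℝ, F.Finite ∧ Set.InjOn X.eval (X.domain \ F)

end RatParam

/-- A real Möbius transformation `t ↦ (a t + b)/(c t + d)` with `a d - b c ≠ 0`. -/
structure Mobius where
  a : ℝ
  b : ℝ
  c : ℝ
  d : ℝ
  det_ne_zero : a * d - b * c ≠ 0

namespace Mobius

/-- The value of the Möbius transformation at `t`. -/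
def eval (φ : Mobius) (t : ℝ) : ℝ := (φ.a * t + φ.b) / (φ.c * t + φ.d)

/-- The set of parameters where the Möbius transformation is defined. -/
def domain (φ : Mobius) : Set ℝ := {t | φ.c * t + φ.d ≠ 0}

/-- A Möbius transformation is trivial if it is the identity map (where defined). -/
def IsTrivial (φ : Mobius) : Prop := ∀ t ∈ φ.domain, φ.eval t = t

/-- The identity Möbius transformation. -/
def one : Mobius := ⟨1, 0, 0, 1, by norm_num⟩

/-- Composition of Möbius transformations (via multiplication of coefficient matrices). -/
def comp (φ ψ : Mobius) : Mobius where
  a := φ.a * ψ.a + φ.b * ψ.c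
  b := φ.a * ψ.b + φ.b * ψ.d
  c := φ.c * ψ.a + φ.d * ψ.c
  d := φ.c * ψ.b + φ.d * ψ.d
  det_ne_zero := by
    have h : (φ.a * ψ.a + φ.b * ψ.c) * (φ.c * ψ.b + φ.d * ψ.d) -
        (φ.a * ψ.b + φ.b * ψ.d) * (φ.c * ψ.a + φ.d * ψ.c) =
        (φ.a * φ.d - φ.b * φ.c) * (ψ.a * ψ.d - ψ.b * ψ.c) := by ring
    rw [h]
    exact mul_ne_zero φ.det_ne_zero ψ.det_ne_zero

/-- The `k`-fold composition of a Möbius transformation with itself. -/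
def pow (φ : Mobius) : ℕ → Mobius
  | 0 => one
  | k + 1 => (pow φ k).comp φ

end Mobius

/-!
Properness cancels `x` from `x (φ₁ t) = x (φ₂ t)` unless `φ₁ t` or `φ₂ t` lies in a finite
exceptional set, and by injectivity of the `φᵢ` only finitely many `t` are lost in this way.
So `φ₁` and `φ₂` agree at infinitely many points, while already three suffice to make them equal:
clearing denominators in `φ₁ t = φ₂ t` gives a polynomial equation of degree at most `2`.
-/

namespace Mobius

theorem injOn_eval (φ : Mobius) : Set.InjOn φ.eval φ.domain := by
  intro s hs t ht hst
  have hcross : (φ.a * s + φ.b) * (φ.c * t + φ.d) = (φ.a * t + φ.b) * (φ.c * s + φ.d) :=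
    (div_eq_div_iff hs ht).mp hst
  have hdet : (φ.a * φ.d - φ.b * φ.c) * (s - t) = 0 := by linear_combination hcross
  exact sub_eq_zero.mp ((mul_eq_zero.mp hdet).resolve_left φ.det_ne_zero)

theorem finite_domain_inter_preimage_eval (φ : Mobius) {F : Set ℝ} (hF : F.Finite) :
    (φ.domain ∩ φ.eval ⁻¹' F).Finite :=
  .of_injOn (f := φ.eval) (fun _ ht => ht.2) (φ.injOn_eval.mono Set.inter_subset_left) hF

/-- The numerator of the difference `φ - ψ` of two Möbius transformations over the product of
their denominators; its roots are the points where `φ` and `ψ` agree. It is not reduced, so it may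
also vanish at a common pole. -/
def crossPoly (φ ψ : Mobius) : ℝ[X] :=
  (C φ.a * X + C φ.b) * (C ψ.c * X + C ψ.d) - (C ψ.a * X + C ψ.b) * (C φ.c * X + C φ.d)

theorem natDegree_crossPoly_le (φ ψ : Mobius) : (crossPoly φ ψ).natDegree ≤ 2 := by
  unfold crossPoly
  compute_degree

theorem eval_crossPoly_eq_zero_iff {φ ψ : Mobius} {t : ℝ} (hφ : t ∈ φ.domain)
    (hψ : t ∈ ψ.domain) : (crossPoly φ ψ).eval t = 0 ↔ φ.eval t = ψ.eval t := by
  simp only [crossPoly, eval_sub, eval_mul, eval_add, eval_C, eval_X, sub_eq_zero]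
  exact (div_eq_div_iff hφ hψ).symm

theorem eqOn_eval_of_two_lt_card {φ ψ : Mobius} {s : Finset ℝ} (hs : 2 < s.card)
    (hφ : ↑s ⊆ φ.domain) (hψ : ↑s ⊆ ψ.domain) (h : Set.EqOn φ.eval ψ.eval s) :
    Set.EqOn φ.eval ψ.eval (φ.domain ∩ ψ.domain) := by
  have hzero : crossPoly φ ψ = 0 :=
    eq_zero_of_natDegree_lt_card_of_eval_eq_zero' _ s
      (fun t ht => (eval_crossPoly_eq_zero_iff (hφ ht) (hψ ht)).mpr (h ht))
      ((natDegree_crossPoly_le φ ψ).trans_lt hs)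
  rintro t ⟨htφ, htψ⟩
  exact (eval_crossPoly_eq_zero_iff htφ htψ).mp (by rw [hzero, eval_zero])

end Mobius

theorem statement_1_general {α : Type*} {f : ℝ → α} {D F : Set ℝ} (hF : F.Finite)
    (hf : Set.InjOn f (D \ F)) (φ₁ φ₂ : Mobius)
    (h : {t : ℝ | t ∈ φ₁.domain ∧ t ∈ φ₂.domain ∧ φ₁.eval t ∈ D ∧ φ₂.eval t ∈ D ∧
      f (φ₁.eval t) = f (φ₂.eval t)}.Infinite) :
    Set.EqOn φ₁.eval φ₂.eval (φ₁.domain ∩ φ₂.domain) := by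
  have hgood := h.sdiff <| (φ₁.finite_domain_inter_preimage_eval hF).union
    (φ₂.finite_domain_inter_preimage_eval hF)
  obtain ⟨s, hs, hcard⟩ := hgood.exists_subset_card_eq 3
  refine Mobius.eqOn_eval_of_two_lt_card (by lia) (fun t ht => (hs ht).1.1)
    (fun t ht => (hs ht).1.2.1) fun t ht => ?_
  obtain ⟨⟨h₁, h₂, hD₁, hD₂, heq⟩, hexc⟩ := hs ht
  exact hf ⟨hD₁, fun hF₁ => hexc (.inl ⟨h₁, hF₁⟩)⟩ ⟨hD₂, fun hF₂ => hexc (.inr ⟨h₂, hF₂⟩)⟩ heq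

/-- Let `x` be a proper rational parametrization (of an infinite rational curve
`C ⊆ ℝⁿ`), and let `φ₁` and `φ₂` be real Möbius transformations such that `x(φ₁(t)) = x(φ₂(t))`
for all but finitely many `t ∈ ℝ` (all four expressions being defined). Then `φ₁` and `φ₂` are
equal as maps, i.e., `φ₁(t) = φ₂(t)` for every `t` at which both are defined. -/
theorem statement_1 {n : ℕ} (X : RatParam n) (hX : X.Proper) (hCinf : X.curve.Infinite)
    (φ₁ φ₂ : Mobius)
    (h : {t : ℝ | t ∈ φ₁.domain ∧ t ∈ φ₂.domain ∧ φ₁.eval t ∈ X.domain ∧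
      φ₂.eval t ∈ X.domain ∧ X.eval (φ₁.eval t) = X.eval (φ₂.eval t)}ᶜ.Finite) :
    ∀ t : ℝ, t ∈ φ₁.domain → t ∈ φ₂.domain → φ₁.eval t = φ₂.eval t := by
  obtain ⟨F, hF, hinj⟩ := hX
  have hinf := h.infinite_compl
  rw [compl_compl] at hinf
  exact fun t h₁ h₂ => statement_1_general hF hinj φ₁ φ₂ hinf ⟨h₁, h₂⟩
end
end

section
/- Let C ⊆ ℝ³ be an infinite rational space curve not contained in any affine plane, and suppose C is invariant under a rotation f of ℝ³ with axis L. Then f has finite order (so its rotation angle is a rational multiple of 2π); moreover, for every affine plane Π normal to L that contains a point of C not lying on L, the intersection C ∩ Π is a finite set and the order k of f satisfies k ≤ |C ∩ Π|. -/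
open Polynomial Matrix RealInnerProductSpace

noncomputable section

/-- A rotation of `ℝ³`: an orientation-preserving isometry `x ↦ Q x + v` (`Q ∈ SO(3)`),
different from the identity, having a fixed point. -/
def IsRotation (f : EuclideanSpace ℝ (Fin 3) → EuclideanSpace ℝ (Fin 3)) : Prop :=
  (∃ (Q : Matrix (Fin 3) (Fin 3) ℝ) (v : EuclideanSpace ℝ (Fin 3)),
    Q ∈ Matrix.orthogonalGroup (Fin 3) ℝ ∧ Q.det = 1 ∧ ∀ x i, f x i = Q.mulVec x i + v i) ∧
  f ≠ id ∧ ∃ p, f p = p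

/-!
Let `f` be an isometry of `ℝⁿ` preserving the curve. If `w` is parallel to the fixed space of `f`,
then `x ↦ ⟪x, w⟫` is `f`-invariant, because `⟪x, a - b⟫` depends only on the distances from `x` to
the fixed points `a` and `b`. Hence `f` permutes each section of the curve by a hyperplane normal
to `w`, and such a section is finite, being cut out by a nonzero polynomial in the parameter. So
every point of the curve is periodic; a common period of finitely many points spanning the space
is a period of `f`. When the fixed space has codimension at most two, an iterate fixing one point
that `f` moves is already the identity, so every point moved by `f` has period exactly the order of
`f`, and its orbit lies in a single section.
-/

open Function Module

namespace RatParam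

lemma exists_eval_eq_prod_mul_inner_sub {n : ℕ} (X : RatParam n)
    (w : EuclideanSpace ℝ (Fin n)) (c : ℝ) :
    ∃ P : ℝ[X], ∀ t ∈ X.domain, P.eval t = (∏ i, (X.q i).eval t) * (⟪X.eval t, w⟫ - c) := by
  refine ⟨∑ i, Polynomial.C (w i) * X.p i * ∏ j ∈ Finset.univ.erase i, X.q j
    - Polynomial.C c * ∏ i, X.q i, fun t ht => ?_⟩
  have clear_denominator (i : Fin n) : (∏ j, (X.q j).eval t) * (X.eval t i * w i) =
      w i * (X.p i).eval t * ∏ j ∈ Finset.univ.erase i, (X.q j).eval t := by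
    have hi : (X.q i).eval t ≠ 0 := ht i
    rw [← Finset.mul_prod_erase Finset.univ _ (Finset.mem_univ i), RatParam.eval]
    field_simp
  have inner_eq : ⟪X.eval t, w⟫ = ∑ i, X.eval t i * w i := by
    simp [PiLp.inner_apply, mul_comm]
  rw [inner_eq, mul_sub, Finset.mul_sum, Finset.sum_congr rfl fun i _ => clear_denominator i]
  simp only [eval_sub, eval_finsetSum, eval_mul, eval_C, eval_prod]
  ring

theorem finite_curve_inter_hyperplane {n : ℕ} {X : RatParam n} {w : EuclideanSpace ℝ (Fin n)}
    {c : ℝ} (h : ¬ ∀ y ∈ X.curve, ⟪y, w⟫ = c) : (X.curve ∩ {x | ⟪x, w⟫ = c}).Finite := by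
  obtain ⟨P, hP⟩ := X.exists_eval_eq_prod_mul_inner_sub w c
  have mem_iff_isRoot : ∀ t ∈ X.domain, ⟪X.eval t, w⟫ = c ↔ P.IsRoot t := fun t ht => by
    have hq : ∏ i, (X.q i).eval t ≠ 0 := Finset.prod_ne_zero_iff.mpr fun i _ => ht i
    rw [IsRoot, hP t ht, mul_eq_zero_iff_left hq, sub_eq_zero]
  have hP0 : P ≠ 0 := by
    rintro rfl
    refine h ?_
    rintro _ ⟨t, ht, rfl⟩
    exact (mem_iff_isRoot t ht).mpr eval_zero
  refine ((finite_setOfPred_isRoot hP0).image X.eval).subset ?_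
  rintro _ ⟨⟨t, ht, rfl⟩, hy⟩
  exact ⟨t, (mem_iff_isRoot t ht).mp hy, rfl⟩

end RatParam

section PeriodicPoints

variable {α : Type*} {f : α → α} {s : Set α}

lemma subset_periodicPts_of_finite (hs : s.Finite) (hmaps : Set.MapsTo f s s)
    (hinj : Set.InjOn f s) : s ⊆ periodicPts f := fun x hx => by
  have := hs.to_subtype
  have hper := (hmaps.restrict_inj.mpr hinj).mem_periodicPts ⟨x, hx⟩
  have hsemi : Semiconj ((↑) : s → α) (hmaps.restrict f s s) f := fun _ => rfl
  exact hsemi.mapsTo_periodicPts hper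

lemma minimalPeriod_le_ncard (hs : s.Finite) (hmaps : Set.MapsTo f s s) {x : α} (hx : x ∈ s) :
    minimalPeriod f x ≤ s.ncard := by
  have hcard := Set.ncard_le_ncard_of_injOn (s := Set.Iio (minimalPeriod f x)) (f^[·] x)
    (fun m _ => hmaps.iterate m hx) iterate_injOn_Iio_minimalPeriod hs
  simpa [Set.ncard_eq_toFinset_card'] using hcard

lemma exists_pos_forall_isPeriodicPt (hs : s.Finite) (hper : s ⊆ periodicPts f) :
    ∃ k > 0, ∀ x ∈ s, IsPeriodicPt f k x := by
  lift s to Finset α using hs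
  exact ⟨∏ x ∈ s, minimalPeriod f x,
    Finset.prod_pos fun x hx => minimalPeriod_pos_of_mem_periodicPts (hper hx),
    fun x hx => (isPeriodicPt_minimalPeriod f x).trans_dvd (Finset.dvd_prod_of_mem _ hx)⟩

end PeriodicPoints

lemma isometry_iterate {α : Type*} [PseudoEMetricSpace α] {f : α → α} (hf : Isometry f) :
    ∀ k : ℕ, Isometry f^[k]
  | 0 => isometry_id
  | k + 1 => (isometry_iterate hf k).comp hf

variable {E : Type*} [NormedAddCommGroup E] [InnerProductSpace ℝ E]

section LinearIsometry

variable [FiniteDimensional ℝ E] {g : E →ₗᵢ[ℝ] E} {S : Submodule ℝ E}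

lemma apply_mem_orthogonal_of_mapsTo (hS : ∀ x ∈ S, g x ∈ S) {z : E} (hz : z ∈ Sᗮ) :
    g z ∈ Sᗮ := by
  have hmap : S.map g.toLinearMap = S :=
    Submodule.eq_of_le_of_finrank_eq (Submodule.map_le_iff_le_comap.mpr hS)
      (S.equivMapOfInjective g.toLinearMap g.injective).finrank_eq.symm
  intro x hx
  rw [← hmap] at hx
  obtain ⟨x, hx, rfl⟩ := hx
  exact (g.inner_map_map x z).trans (hz x hx)

lemma apply_eq_neg_of_finrank_le_one (hS : finrank ℝ S ≤ 1) {x : E} (hx : x ∈ S)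
    (hgx : g x ∈ S) (hne : g x ≠ x) : g x = -x := by
  obtain ⟨u, hu⟩ := finrank_le_one_iff.mp hS
  obtain ⟨a, ha⟩ := hu ⟨x, hx⟩
  obtain ⟨b, hb⟩ := hu ⟨g x, hgx⟩
  replace ha : a • (u : E) = x := congrArg Subtype.val ha
  replace hb : b • (u : E) = g x := congrArg Subtype.val hb
  have hnorm : |b| * ‖(u : E)‖ = |a| * ‖(u : E)‖ := by
    rw [← Real.norm_eq_abs, ← Real.norm_eq_abs, ← norm_smul, ← norm_smul, ha, hb, g.norm_map]
  rcases mul_eq_mul_right_iff.mp hnorm with habs | hu0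
  · rcases abs_eq_abs.mp habs with rfl | rfl
    · exact absurd (hb.symm.trans ha) hne
    · rw [← hb, neg_smul, ha]
  · have hx0 : x = 0 := by rw [← ha, norm_eq_zero.mp hu0, smul_zero]
    exact absurd (by rw [hx0, map_zero]) hne

lemma pow_apply_of_finrank_le_one (hS : finrank ℝ S ≤ 1) {x : E} (hx : x ∈ S) (hgx : g x ∈ S)
    (hne : g x ≠ x) (m : ℕ) : (g ^ m) x = (-1 : ℝ) ^ m • x := by
  induction m with
  | zero => rw [pow_zero, pow_zero, one_smul, LinearIsometry.coe_one, id]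
  | succ m ih =>
    calc (g ^ (m + 1)) x = (g ^ m) (g x) := by
          rw [pow_succ, LinearIsometry.coe_mul, Function.comp_apply]
      _ = (-1 : ℝ) ^ (m + 1) • x := by
        rw [apply_eq_neg_of_finrank_le_one hS hx hgx hne, map_neg, ih, pow_succ, mul_neg_one,
          neg_smul]

lemma finrank_orthogonal_eq_one_of_lt_of_lt_top {K M : Submodule ℝ E} (hKM : K < M) (hM : M < ⊤)
    (hcodim : finrank ℝ E ≤ finrank ℝ K + 2) :
    finrank ℝ ↥(Kᗮ ⊓ M) = 1 ∧ finrank ℝ Mᗮ = 1 := by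
  have hKM_rank := Submodule.finrank_lt_finrank_of_lt hKM
  have hM_rank := Submodule.finrank_lt hM.ne
  have hinf_rank := Submodule.finrank_add_inf_finrank_orthogonal hKM.le
  have horth_rank := M.finrank_add_finrank_orthogonal
  omega

/- Otherwise the fixed space `K` of `g` and the fixed space `M` of `g ^ m` satisfy `K < M < ⊤`, so
`g` preserves the two lines `Kᗮ ⊓ M` and `Mᗮ` and acts by `-1` on both. But then `g ^ m` acts by the
same sign `(-1) ^ m` on both, whereas it fixes the first line pointwise and not the second. -/
theorem pow_eq_one_of_pow_apply_eq
    (hcodim : finrank ℝ E ≤ finrank ℝ g.toLinearMap.fixedSubmodule + 2) {y : E} (hy : g y ≠ y)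
    {m : ℕ} (hm : (g ^ m) y = y) : g ^ m = 1 := by
  set K := g.toLinearMap.fixedSubmodule
  set M := (g ^ m).toLinearMap.fixedSubmodule
  have mem_K {x : E} : x ∈ K ↔ g x = x := LinearMap.mem_fixedSubmodule_iff
  have mem_M {x : E} : x ∈ M ↔ (g ^ m) x = x := LinearMap.mem_fixedSubmodule_iff
  have hKM : K < M := SetLike.lt_iff_le_and_exists.mpr
    ⟨fun x hx => by rw [mem_M, LinearIsometry.coe_pow, iterate_fixed (mem_K.mp hx)],
      y, mem_M.mpr hm, mt mem_K.mp hy⟩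
  by_contra hne
  have hM_top : M < ⊤ := lt_top_iff_ne_top.mpr fun h =>
    hne (LinearIsometry.ext fun x => mem_M.mp (h ▸ Submodule.mem_top))
  have map_K : ∀ x ∈ K, g x ∈ K := fun x hx => by rwa [mem_K.mp hx]
  have map_M : ∀ x ∈ M, g x ∈ M := fun x hx => by
    have hcomm : (g ^ m) (g x) = g ((g ^ m) x) :=
      DFunLike.congr_fun ((Commute.refl g).pow_left m) x
    rw [mem_M, hcomm, mem_M.mp hx]
  obtain ⟨hrank_inf, hrank_orth⟩ := finrank_orthogonal_eq_one_of_lt_of_lt_top hKM hM_top hcodim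
  obtain ⟨⟨b, hb⟩, hb0⟩ := finrank_pos_iff_exists_ne_zero.mp (hrank_inf ▸ one_pos)
  obtain ⟨⟨z, hz⟩, hz0⟩ := finrank_pos_iff_exists_ne_zero.mp (hrank_orth ▸ one_pos)
  rw [Ne, Submodule.mk_eq_zero] at hb0 hz0
  have hbK : b ∉ K := fun h => hb0 (Submodule.disjoint_def.mp K.orthogonal_disjoint b h hb.1)
  have hzM : z ∉ M := fun h => hz0 (Submodule.disjoint_def.mp M.orthogonal_disjoint z h hz)
  have hgb : (g ^ m) b = (-1 : ℝ) ^ m • b := pow_apply_of_finrank_le_one hrank_inf.le hb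
    ⟨apply_mem_orthogonal_of_mapsTo map_K hb.1, map_M b hb.2⟩ (mt mem_K.mpr hbK) m
  have hgz : (g ^ m) z = (-1 : ℝ) ^ m • z := pow_apply_of_finrank_le_one hrank_orth.le hz
    (apply_mem_orthogonal_of_mapsTo map_M hz) (mt mem_K.mpr fun h => hzM (hKM.le h)) m
  have hsign : (-1 : ℝ) ^ m = 1 := smul_left_injective ℝ hb0 <| by
    simpa only [one_smul, hgb] using mem_M.mp hb.2
  exact hzM (mem_M.mpr (by rw [hgz, hsign, one_smul]))

end LinearIsometry

section Isometry

variable {f : E → E}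

lemma inner_apply_of_mem_vectorSpan_fixedPoints (hf : Isometry f) {w : E}
    (hw : w ∈ vectorSpan ℝ (fixedPoints f)) (x : E) : ⟪f x, w⟫ = ⟪x, w⟫ := by
  induction hw using Submodule.span_induction with
  | mem _ h =>
    obtain ⟨a, ha, b, hb, rfl⟩ := h
    have norm_sub {p : E} (hp : p ∈ fixedPoints f) : ‖f x - p‖ ^ 2 = ‖x - p‖ ^ 2 := by
      rw [← dist_eq_norm, ← dist_eq_norm, ← hf.dist_eq x p, hp.eq]
    have expand (z : E) : ⟪z, a - b⟫ = (‖z - b‖ ^ 2 - ‖z - a‖ ^ 2 + ‖a‖ ^ 2 - ‖b‖ ^ 2) / 2 := by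
      rw [norm_sub_sq_real, norm_sub_sq_real, inner_sub_right]
      ring
    simp only [vsub_eq_sub, expand, norm_sub ha, norm_sub hb]
  | zero => simp only [inner_zero_right]
  | add u v _ _ hu hv => rw [inner_add_right, inner_add_right, hu, hv]
  | smul r u _ hu => rw [inner_smul_right, inner_smul_right, hu]

lemma eq_id_of_vectorSpan_fixedPoints_eq_top (hf : Isometry f)
    (h : vectorSpan ℝ (fixedPoints f) = ⊤) : f = id :=
  funext fun x => ext_inner_right ℝ fun _ =>
    inner_apply_of_mem_vectorSpan_fixedPoints hf (h ▸ Submodule.mem_top) x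

lemma mapsTo_inter_hyperplane (hf : Isometry f) {s : Set E} (hs : Set.MapsTo f s s) {w : E}
    (hw : w ∈ vectorSpan ℝ (fixedPoints f)) (c : ℝ) :
    Set.MapsTo f (s ∩ {x | ⟪x, w⟫ = c}) (s ∩ {x | ⟪x, w⟫ = c}) := fun y hy =>
  ⟨hs hy.1, (inner_apply_of_mem_vectorSpan_fixedPoints hf hw y).trans hy.2⟩

variable [FiniteDimensional ℝ E]

lemma vectorSpan_eq_top_of_not_subset_hyperplane {s : Set E}
    (hs : ¬ ∃ (v : E) (r : ℝ), v ≠ 0 ∧ ∀ y ∈ s, ⟪y, v⟫ = r) : vectorSpan ℝ s = ⊤ := by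
  rw [← Submodule.orthogonal_eq_bot_iff, Submodule.eq_bot_iff]
  intro v hv
  by_contra hv0
  rcases s.eq_empty_or_nonempty with rfl | ⟨a, ha⟩
  · exact hs ⟨v, 0, hv0, fun _ h => h.elim⟩
  · refine hs ⟨v, ⟪a, v⟫, hv0, fun y hy => ?_⟩
    rw [← sub_eq_zero, ← inner_sub_left]
    exact hv _ (vsub_mem_vectorSpan ℝ hy ha)

theorem exists_pos_iterate_eq_id_of_subset_periodicPts (hf : Isometry f) {s : Set E}
    (hs : vectorSpan ℝ s = ⊤) (hper : s ⊆ periodicPts f) : ∃ k > 0, f^[k] = id := by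
  obtain ⟨t, hts, hspan, hindep⟩ := exists_affineIndependent ℝ E s
  obtain ⟨k, hk, hfix⟩ :=
    exists_pos_forall_isPeriodicPt (finite_set_of_fin_dim_affineIndependent ℝ hindep)
      (hts.trans hper)
  have ht : vectorSpan ℝ t = ⊤ := by
    rw [← direction_affineSpan, hspan, direction_affineSpan, hs]
  exact ⟨k, hk, eq_id_of_vectorSpan_fixedPoints_eq_top (isometry_iterate hf k)
    (top_unique (ht ▸ vectorSpan_mono ℝ hfix))⟩

theorem iterate_eq_id_of_iterate_apply_eq (hf : Isometry f) (hfix : (fixedPoints f).Nonempty)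
    (hcodim : finrank ℝ E ≤ finrank ℝ (vectorSpan ℝ (fixedPoints f)) + 2) {y : E}
    (hy : f y ≠ y) {m : ℕ} (hm : f^[m] y = y) : f^[m] = id := by
  obtain ⟨p, hp⟩ := hfix
  set F := hf.affineIsometryOfStrictConvexSpace
  set g := F.linearIsometry
  have map_sub (a b : E) : g (a - b) = f a - f b := F.toAffineMap.linearMap_vsub a b
  have hsemi : Semiconj (· - p) f g := fun x => by rw [map_sub, hp.eq]
  have iterate_fix (k : ℕ) (x : E) : (g ^ k) (x - p) = x - p ↔ f^[k] x = x := by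
    rw [LinearIsometry.coe_pow, ← (hsemi.iterate_right k).eq x, sub_left_inj]
  have hle : vectorSpan ℝ (fixedPoints f) ≤ g.toLinearMap.fixedSubmodule := by
    refine Submodule.span_le.mpr ?_
    rintro _ ⟨a, ha, b, hb, rfl⟩
    exact (map_sub a b).trans (by rw [ha.eq, hb.eq]; rfl)
  have hgm : g ^ m = 1 := pow_eq_one_of_pow_apply_eq
    (hcodim.trans (Nat.add_le_add_right (Submodule.finrank_mono hle) 2))
    (mt (iterate_fix 1 y).mp hy) ((iterate_fix m y).mpr hm)
  exact funext fun x => (iterate_fix m x).mp (by rw [hgm, LinearIsometry.coe_one, id])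

end Isometry

theorem RatParam.curve_subset_periodicPts {n : ℕ} {X : RatParam n}
    (hnondeg : ¬ ∃ (v : EuclideanSpace ℝ (Fin n)) (r : ℝ), v ≠ 0 ∧ ∀ y ∈ X.curve, ⟪y, v⟫ = r)
    {f : EuclideanSpace ℝ (Fin n) → EuclideanSpace ℝ (Fin n)} (hf : Isometry f)
    (hfix : vectorSpan ℝ (fixedPoints f) ≠ ⊥) (hinv : Set.MapsTo f X.curve X.curve) :
    X.curve ⊆ periodicPts f := fun y hy => by
  obtain ⟨w, hw, hw0⟩ := Submodule.exists_mem_ne_zero_of_ne_bot hfix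
  have hfinite : (X.curve ∩ {x | ⟪x, w⟫ = ⟪y, w⟫}).Finite :=
    finite_curve_inter_hyperplane fun h => hnondeg ⟨w, _, hw0, h⟩
  exact subset_periodicPts_of_finite hfinite (mapsTo_inter_hyperplane hf hinv hw _)
    hf.injective.injOn ⟨hy, rfl⟩

lemma mem_vectorSpan_of_eq_line {𝕜 V : Type*} [Ring 𝕜] [AddCommGroup V] [Module 𝕜 V] {s : Set V}
    {p w : V} (hs : s = {x | ∃ r : 𝕜, x = p + r • w}) : w ∈ vectorSpan 𝕜 s := by
  have hpw : p + w ∈ s := hs ▸ ⟨1, by rw [one_smul]⟩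
  have hp : p ∈ s := hs ▸ ⟨0, by rw [zero_smul, add_zero]⟩
  simpa using vsub_mem_vectorSpan 𝕜 hpw hp

section Rotation

lemma exists_mulVec_eq_self_of_odd_card {ι K : Type*} [Fintype ι] [DecidableEq ι] [Field K]
    [NeZero (2 : K)] (hodd : Odd (Fintype.card ι)) {Q : Matrix ι ι K} (hQ : Q * Qᵀ = 1)
    (hdet : Q.det = 1) : ∃ w ≠ 0, Q *ᵥ w = w := by
  have hneg : (Q - 1).det = -(Q - 1).det :=
    calc (Q - 1).det = (Q * -(Q - 1)ᵀ).det := by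
          rw [transpose_sub, transpose_one, neg_sub, mul_sub, hQ, mul_one]
      _ = -(Q - 1).det := by
          rw [det_mul, hdet, one_mul, det_neg, det_transpose, hodd.neg_one_pow, neg_one_mul]
  have hzero : (Q - 1).det = 0 := by
    refine (mul_eq_zero_iff_left (NeZero.ne (2 : K))).mp ?_
    linear_combination hneg
  obtain ⟨w, hw0, hw⟩ := exists_mulVec_eq_zero_iff.mpr hzero
  exact ⟨w, hw0, sub_eq_zero.mp (by rwa [sub_mulVec, one_mulVec] at hw)⟩

lemma norm_toLp_mulVec_of_mem_orthogonalGroup {ι : Type*} [Fintype ι] [DecidableEq ι]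
    {Q : Matrix ι ι ℝ} (hQ : Q ∈ orthogonalGroup ι ℝ) (x : ι → ℝ) :
    ‖WithLp.toLp 2 (Q *ᵥ x)‖ = ‖WithLp.toLp 2 x‖ := by
  refine (sq_eq_sq₀ (norm_nonneg _) (norm_nonneg _)).mp ?_
  rw [← real_inner_self_eq_norm_sq, ← real_inner_self_eq_norm_sq]
  change (Q *ᵥ x) ⬝ᵥ (Q *ᵥ x) = x ⬝ᵥ x
  rw [dotProduct_mulVec, vecMul_mulVec, (mem_orthogonalGroup_iff' ι ℝ).mp hQ, vecMul_one]

variable {f : EuclideanSpace ℝ (Fin 3) → EuclideanSpace ℝ (Fin 3)}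

theorem IsRotation.isometry (hf : IsRotation f) : Isometry f := by
  obtain ⟨⟨Q, v, hQ, -, hfQ⟩, -⟩ := hf
  refine Isometry.of_dist_eq fun x y => ?_
  have hsub : f x - f y = WithLp.toLp 2 (Q *ᵥ (x - y).ofLp) := by
    ext i
    simp [hfQ, mulVec_sub]
  rw [dist_eq_norm, hsub, norm_toLp_mulVec_of_mem_orthogonalGroup hQ, dist_eq_norm]

theorem IsRotation.finrank_vectorSpan_fixedPoints_pos (hf : IsRotation f) :
    0 < finrank ℝ (vectorSpan ℝ (fixedPoints f)) := by
  obtain ⟨⟨Q, v, hQ, hdet, hfQ⟩, -, p, hp⟩ := hf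
  obtain ⟨w, hw0, hw⟩ := exists_mulVec_eq_self_of_odd_card (by decide)
    ((mem_orthogonalGroup_iff (Fin 3) ℝ).mp hQ) hdet
  have hpw : f (p + WithLp.toLp 2 w) = p + WithLp.toLp 2 w := by
    ext i
    have hpi := hfQ p i
    rw [hp] at hpi
    rw [hfQ, WithLp.ofLp_add, mulVec_add, hw]
    simp only [Pi.add_apply]
    linarith
  have hmem : WithLp.toLp 2 w ∈ vectorSpan ℝ (fixedPoints f) := by
    simpa using vsub_mem_vectorSpan ℝ (s := fixedPoints f) hpw hp
  exact finrank_pos_iff_exists_ne_zero.mpr ⟨⟨_, hmem⟩, by simpa using hw0⟩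

end Rotation

theorem statement_3_general {n : ℕ} (hn : 2 < n) (X : RatParam n)
    (hnondeg : ¬ ∃ (v : EuclideanSpace ℝ (Fin n)) (r : ℝ), v ≠ 0 ∧ ∀ y ∈ X.curve, ⟪y, v⟫ = r)
    {f : EuclideanSpace ℝ (Fin n) → EuclideanSpace ℝ (Fin n)} (hf : Isometry f)
    (hcodim : n ≤ finrank ℝ (vectorSpan ℝ (fixedPoints f)) + 2)
    (hinv : Set.MapsTo f X.curve X.curve) :
    ∃ k : ℕ, 1 ≤ k ∧ f^[k] = id ∧ (∀ m : ℕ, 1 ≤ m → f^[m] = id → k ≤ m) ∧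
      ∀ w ∈ vectorSpan ℝ (fixedPoints f), w ≠ 0 → ∀ c : ℝ,
        (∃ y ∈ X.curve ∩ {x | ⟪x, w⟫ = c}, y ∉ fixedPoints f) →
          (X.curve ∩ {x | ⟪x, w⟫ = c}).Finite ∧ k ≤ (X.curve ∩ {x | ⟪x, w⟫ = c}).ncard := by
  classical
  have hspan : vectorSpan ℝ (fixedPoints f) ≠ ⊥ := fun h => by
    rw [h, finrank_bot] at hcodim
    omega
  have hfix : (fixedPoints f).Nonempty := Set.nonempty_iff_ne_empty.mpr fun h =>
    hspan (by rw [h, vectorSpan_empty])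
  have hper := RatParam.curve_subset_periodicPts hnondeg hf hspan hinv
  have hord := exists_pos_iterate_eq_id_of_subset_periodicPts hf
    (vectorSpan_eq_top_of_not_subset_hyperplane hnondeg) hper
  have hmin (m : ℕ) (hm : 1 ≤ m) (hid : f^[m] = id) : Nat.find hord ≤ m :=
    Nat.find_min' hord ⟨hm, hid⟩
  obtain ⟨hpos, hid⟩ := Nat.find_spec hord
  refine ⟨Nat.find hord, hpos, hid, hmin, fun w hw hw0 c ⟨y, hy, hyfix⟩ => ?_⟩
  have hfinite : (X.curve ∩ {x | ⟪x, w⟫ = c}).Finite :=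
    RatParam.finite_curve_inter_hyperplane fun h => hnondeg ⟨w, c, hw0, h⟩
  have hperiod : f^[minimalPeriod f y] = id :=
    iterate_eq_id_of_iterate_apply_eq hf hfix (by rwa [finrank_euclideanSpace_fin]) hyfix
      (isPeriodicPt_minimalPeriod f y)
  exact ⟨hfinite,
    (hmin _ (minimalPeriod_pos_of_mem_periodicPts (hper hy.1)) hperiod).trans
      (minimalPeriod_le_ncard hfinite (mapsTo_inter_hyperplane hf hinv hw c) hy)⟩

/-- Let `C ⊆ ℝ³` be an infinite rational space curve not contained in any affine
plane, invariant under a rotation `f` of `ℝ³` with axis `L`. Then `f` has finite order; moreover,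
for every affine plane `Π` normal to `L` that contains a point of `C` not lying on `L`, the
intersection `C ∩ Π` is finite and the order `k` of `f` satisfies `k ≤ |C ∩ Π|`. -/
theorem statement_3 (X : RatParam 3) (C : Set (EuclideanSpace ℝ (Fin 3)))
    (hC : C = X.curve) (hCinf : C.Infinite)
    (hnondeg : ¬ ∃ (v : EuclideanSpace ℝ (Fin 3)) (r : ℝ), v ≠ 0 ∧ ∀ y ∈ C, ⟪y, v⟫ = r)
    (f : EuclideanSpace ℝ (Fin 3) → EuclideanSpace ℝ (Fin 3)) (hf : IsRotation f)
    (L : Set (EuclideanSpace ℝ (Fin 3))) (hL : L = {x | f x = x})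
    (hinv : f '' C = C) :
    ∃ k : ℕ, 1 ≤ k ∧ f^[k] = id ∧ (∀ m : ℕ, 1 ≤ m → f^[m] = id → k ≤ m) ∧
      ∀ (p w : EuclideanSpace ℝ (Fin 3)), w ≠ 0 → L = {x | ∃ s : ℝ, x = p + s • w} →
        ∀ c : ℝ, (∃ y ∈ C ∩ {x : EuclideanSpace ℝ (Fin 3) | ⟪x, w⟫ = c}, y ∉ L) →
          (C ∩ {x : EuclideanSpace ℝ (Fin 3) | ⟪x, w⟫ = c}).Finite ∧
          k ≤ (C ∩ {x : EuclideanSpace ℝ (Fin 3) | ⟪x, w⟫ = c}).ncard := by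
  subst hC hL
  obtain ⟨k, hk, hid, hmin, hslice⟩ := statement_3_general (by norm_num) X hnondeg hf.isometry
    (Nat.add_le_add_right hf.finrank_vectorSpan_fixedPoints_pos 2)
    (Set.mapsTo_iff_image_subset.mpr hinv.subset)
  exact ⟨k, hk, hid, hmin, fun p w hw hL => hslice w (mem_vectorSpan_of_eq_line hL) hw⟩
end
end

section
/- Let C ⊆ ℝ³ be an infinite rational space curve that is not a line, and suppose C is invariant under two rotations f₁ and f₂ of ℝ³ with axes L₁ and L₂ respectively. If L₁ and L₂ are parallel (have the same direction), then L₁ = L₂. -/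
open Polynomial Matrix RealInnerProductSpace

noncomputable section

/-- A line in `ℝⁿ`: a one-dimensional affine subspace, as a set. -/
def IsLine {n : ℕ} (S : Set (EuclideanSpace ℝ (Fin n))) : Prop :=
  ∃ (p v : EuclideanSpace ℝ (Fin n)), v ≠ 0 ∧ S = {x | ∃ s : ℝ, x = p + s • v}

/-! A translation by `w ≠ 0` preserving a rational curve puts infinitely many of its points on one
line parallel to `w`, hence, a nonzero rational function having finitely many zeros, all of them;
the curve then fills that line, since two of these points are joined by an arc on which the
parametrization has no pole. So if the curve is not a line, then affine symmetries of it whose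
linear parts commute must commute themselves, because their commutator is a translation. Rotations
with parallel axes have commuting linear parts, and two commuting isometries whose linear parts fix
the same vectors have the same fixed points as soon as each has one. -/

section FixedPoints

variable {V P : Type*} [NormedAddCommGroup V] [InnerProductSpace ℝ V] [MetricSpace P]
  [NormedAddTorsor V P]

lemma apply_eq_self_of_apply_sub_eq_sub (A : V →ₗᵢ[ℝ] V) {d : V} (h : A (A d - d) = A d - d) :
    A d = d := by
  rw [← sub_eq_zero, ← inner_self_eq_zero (𝕜 := ℝ)]
  calc ⟪A d - d, A d - d⟫ = ⟪A d, A (A d - d)⟫ - ⟪d, A d - d⟫ := by rw [h, inner_sub_left]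
    _ = 0 := by rw [A.inner_map_map, sub_self]

lemma apply_eq_self_of_commute {f g : P →ᵃⁱ[ℝ] P} (hfg : Function.Commute f g) {p x : P}
    (hp : f p = p) (hfix : ∀ u, g.linearIsometry u = u → f.linearIsometry u = u) (hx : g x = x) :
    f x = x := by
  have hgf : g (f x) = f x := by rw [← hfg.eq, hx]
  have hdisp : f x -ᵥ x = f.linearIsometry (x -ᵥ p) - (x -ᵥ p) := by
    rw [f.map_vsub, hp, vsub_sub_vsub_cancel_right]
  have hdisp_fixed : f.linearIsometry (f x -ᵥ x) = f x -ᵥ x :=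
    hfix _ (by rw [g.map_vsub, hgf, hx])
  have hd : f.linearIsometry (x -ᵥ p) = x -ᵥ p :=
    apply_eq_self_of_apply_sub_eq_sub _ (hdisp ▸ hdisp_fixed)
  rw [← vsub_eq_zero_iff_eq, hdisp, hd, sub_self]

lemma linearIsometry_apply_eq_self_iff {f : V →ᵃⁱ[ℝ] V} {p v : V}
    (hf : {x | f x = x} = {x | ∃ s : ℝ, x = p + s • v}) {u : V} :
    f.linearIsometry u = u ↔ ∃ s : ℝ, u = s • v := by
  have hp : f p = p := hf.symm.subset ⟨0, by simp⟩
  have hpu : f (p + u) = p + f.linearIsometry u := by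
    rw [add_comm p u, ← vadd_eq_add, f.map_vadd, hp, vadd_eq_add, add_comm]
  calc f.linearIsometry u = u ↔ p + u ∈ {x | f x = x} := by
        rw [Set.mem_ofPred_eq, hpu, add_right_inj]
    _ ↔ ∃ s : ℝ, u = s • v := by simp only [hf, Set.mem_ofPred_eq, add_right_inj]

end FixedPoints

section CommutingRotations

variable {V : Type*} [NormedAddCommGroup V] [InnerProductSpace ℝ V]

lemma commute_of_det_pos_of_finrank_eq_two (hV : Module.finrank ℝ V = 2) {A B : V →ₗᵢ[ℝ] V}
    (hA : 0 < LinearMap.det A.toLinearMap) (hB : 0 < LinearMap.det B.toLinearMap) :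
    Function.Commute A B := by
  have : Fact (Module.finrank ℝ V = 2) := ⟨hV⟩
  have : FiniteDimensional ℝ V := Module.finite_of_finrank_eq_succ hV
  let o : Orientation ℝ V (Fin 2) := (Module.finBasisOfFinrankEq ℝ V hV).orientation
  have exists_rotation {C : V →ₗᵢ[ℝ] V} (hC : 0 < LinearMap.det C.toLinearMap) :
      ∃ θ : Real.Angle, ∀ x, C x = o.rotation θ x := by
    obtain ⟨θ, hθ⟩ :=
      o.exists_linearIsometryEquiv_eq_of_det_pos (f := C.toLinearIsometryEquiv rfl) hC
    exact ⟨θ, fun x => DFunLike.congr_fun hθ x⟩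
  obtain ⟨α, hα⟩ := exists_rotation hA
  obtain ⟨β, hβ⟩ := exists_rotation hB
  intro x
  simp only [hα, hβ, o.rotation_rotation, add_comm]

lemma apply_sub_self_mem_orthogonal (A : V →ₗᵢ[ℝ] V) {K : Submodule ℝ V} (hK : ∀ v ∈ K, A v = v)
    (x : V) : A x - x ∈ Kᗮ := by
  intro v hv
  rw [inner_sub_right, sub_eq_zero]
  nth_rw 1 [← hK v hv]
  exact A.inner_map_map v x

lemma apply_mem_orthogonal (A : V →ₗᵢ[ℝ] V) {K : Submodule ℝ V} (hK : ∀ v ∈ K, A v = v)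
    {x : V} (hx : x ∈ Kᗮ) : A x ∈ Kᗮ := by
  simpa using add_mem (apply_sub_self_mem_orthogonal A hK x) hx

/-- The restriction of a linear isometry that fixes `K` pointwise to the orthogonal complement
of `K`: for a rotation of a three-dimensional space about `K`, the plane rotation it induces. -/
def restrictOrthogonal (A : V →ₗᵢ[ℝ] V) {K : Submodule ℝ V} (hK : ∀ v ∈ K, A v = v) :
    Kᗮ →ₗᵢ[ℝ] Kᗮ where
  toLinearMap := A.toLinearMap.restrict fun _ => apply_mem_orthogonal A hK
  norm_map' x := A.norm_map x

lemma det_restrictOrthogonal [FiniteDimensional ℝ V] (A : V →ₗᵢ[ℝ] V) {K : Submodule ℝ V}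
    (hK : ∀ v ∈ K, A v = v) :
    LinearMap.det (restrictOrthogonal A hK).toLinearMap = LinearMap.det A.toLinearMap := by
  have hmaps : Kᗮ ≤ Kᗮ.comap A.toLinearMap := fun _ => apply_mem_orthogonal A hK
  have hquot : Kᗮ.mapQ Kᗮ A.toLinearMap hmaps = LinearMap.id := by
    ext x
    exact (Submodule.Quotient.eq _).2 (apply_sub_self_mem_orthogonal A hK x)
  rw [LinearMap.det_eq_det_mul_det Kᗮ A.toLinearMap hmaps, hquot, LinearMap.det_id, mul_one]
  rfl

lemma commute_of_fixes_of_finrank_orthogonal_eq_two [FiniteDimensional ℝ V] {K : Submodule ℝ V}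
    (hfin : Module.finrank ℝ Kᗮ = 2) {A B : V →ₗᵢ[ℝ] V} (hA : 0 < LinearMap.det A.toLinearMap)
    (hB : 0 < LinearMap.det B.toLinearMap) (hAK : ∀ v ∈ K, A v = v) (hBK : ∀ v ∈ K, B v = v) :
    Function.Commute A B := by
  have hcomm : Function.Commute (restrictOrthogonal A hAK) (restrictOrthogonal B hBK) :=
    commute_of_det_pos_of_finrank_eq_two hfin (by rwa [det_restrictOrthogonal])
      (by rwa [det_restrictOrthogonal])
  intro x
  obtain ⟨y, hy, z, hz, rfl⟩ := K.exists_add_mem_mem_orthogonal x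
  have hz_comm : A (B z) = B (A z) :=
    congrArg Subtype.val (hcomm ⟨z, hz⟩)
  simp only [map_add, hAK y hy, hBK y hy, hz_comm]

lemma commute_of_apply_eq_self_of_finrank_eq_three (hV : Module.finrank ℝ V = 3)
    {A B : V →ₗᵢ[ℝ] V} (hA : 0 < LinearMap.det A.toLinearMap)
    (hB : 0 < LinearMap.det B.toLinearMap) {v : V} (hv : v ≠ 0) (hAv : A v = v) (hBv : B v = v) :
    Function.Commute A B := by
  have : FiniteDimensional ℝ V := Module.finite_of_finrank_eq_succ hV
  have : Fact (Module.finrank ℝ V = 2 + 1) := ⟨hV⟩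
  have fixes_span {C : V →ₗᵢ[ℝ] V} (hC : C v = v) : ∀ u ∈ ℝ ∙ v, C u = u := by
    intro u hu
    obtain ⟨s, rfl⟩ := Submodule.mem_span_singleton.1 hu
    rw [map_smul, hC]
  exact commute_of_fixes_of_finrank_orthogonal_eq_two
    (Submodule.finrank_orthogonal_span_singleton hv) hA hB (fixes_span hAv) (fixes_span hBv)

end CommutingRotations

lemma IsRotation.exists_affineIsometry
    {f : EuclideanSpace ℝ (Fin 3) → EuclideanSpace ℝ (Fin 3)} (hf : IsRotation f) :
    ∃ F : EuclideanSpace ℝ (Fin 3) →ᵃⁱ[ℝ] EuclideanSpace ℝ (Fin 3),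
      ⇑F = f ∧ 0 < LinearMap.det F.linearIsometry.toLinearMap := by
  obtain ⟨⟨Q, b, hQ, hdet, hfQ⟩, -, -⟩ := hf
  have inner_map (x y : EuclideanSpace ℝ (Fin 3)) :
      ⟪toLpLin 2 2 Q x, toLpLin 2 2 Q y⟫ = ⟪x, y⟫ := by
    have hQQ : Qᵀ * Q = 1 := (mem_orthogonalGroup_iff' (Fin 3) ℝ).1 hQ
    simp only [EuclideanSpace.inner_eq_star_dotProduct, star_trivial, toLpLin_apply,
      dotProduct_mulVec, vecMul_mulVec, hQQ, vecMul_one]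
  let F : EuclideanSpace ℝ (Fin 3) →ᵃⁱ[ℝ] EuclideanSpace ℝ (Fin 3) :=
    { toFun := f
      linear := toLpLin 2 2 Q
      map_vadd' x u := by
        ext i
        simp only [vadd_eq_add, PiLp.add_apply, hfQ, toLpLin_apply, WithLp.ofLp_add, mulVec_add,
          Pi.add_apply, add_assoc]
      norm_map := ((toLpLin 2 2 Q).isometryOfInner inner_map).norm_map }
  have hF : F.linearIsometry.toLinearMap = toLpLin 2 2 Q := rfl
  refine ⟨F, rfl, ?_⟩
  rw [hF, toLpLin_eq_toLin, LinearMap.det_toLin, hdet]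
  exact one_pos

section RealLine

lemma exists_uIcc_subset_compl_of_infinite {α : Type*} [LinearOrder α] {T F : Set α}
    (hT : T.Infinite) (hF : F.Finite) (hTF : Disjoint T F) :
    ∃ a ∈ T, ∃ b ∈ T, a ≠ b ∧ Set.uIcc a b ⊆ Fᶜ := by
  -- By pigeonhole, two points of `T` have the same points of `F` below them.
  obtain ⟨a, ha, b, hb, hab, hbelow⟩ := hT.exists_ne_map_eq_of_mapsTo
    (f := fun a => F ∩ Set.Iio a) (fun _ _ => Set.inter_subset_left) hF.finite_subsets
  refine ⟨a, ha, b, hb, hab, fun s hs hsF => ?_⟩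
  have hlt_iff : s < a ↔ s < b := by simpa [hsF] using Set.ext_iff.1 hbelow s
  have hsa : s ≠ a := hTF.symm.ne_of_mem hsF ha
  have hsb : s ≠ b := hTF.symm.ne_of_mem hsF hb
  grind [Set.mem_uIcc]

lemma forall_of_periodic_of_forall_mem_uIcc {S : ℝ → Prop} (hS : Function.Periodic S 1)
    {m n : ℤ} (hmn : m ≠ n) (h : ∀ s ∈ Set.uIcc (m : ℝ) n, S s) (s : ℝ) : S s := by
  obtain ⟨s', ⟨hmin, hmax⟩, hs'⟩ := hS.exists_mem_Ico one_pos s (min m n : ℤ)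
  have hwidth : ((min m n : ℤ) : ℝ) + 1 ≤ (max m n : ℤ) := by
    exact_mod_cast Int.add_one_le_of_lt (min_lt_max.2 hmn)
  rw [hs']
  push_cast at hmin hmax hwidth
  exact h s' ⟨hmin, (hmax.trans_le hwidth).le⟩

lemma exists_mem_uIcc_eq_add_smul {V : Type*} [AddCommGroup V] [Module ℝ V] [TopologicalSpace V]
    [IsTopologicalAddGroup V] [SeparatingDual ℝ V] {γ : ℝ → V} {a b α β s : ℝ} {c w : V}
    (hw : w ≠ 0) (hγ : ContinuousOn γ (Set.uIcc a b))
    (hline : ∀ t ∈ Set.uIcc a b, ∃ r : ℝ, γ t = c + r • w) (ha : γ a = c + α • w)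
    (hb : γ b = c + β • w) (hs : s ∈ Set.uIcc α β) : ∃ t ∈ Set.uIcc a b, γ t = c + s • w := by
  obtain ⟨φ, hφ⟩ : ∃ φ : StrongDual ℝ V, φ w = 1 := SeparatingDual.exists_eq_one hw
  have hcoord (r : ℝ) : φ (c + r • w - c) = r := by simp [hφ]
  have hcont : ContinuousOn (fun t => φ (γ t - c)) (Set.uIcc a b) :=
    φ.continuous.comp_continuousOn (hγ.sub continuousOn_const)
  have hivt := intermediate_value_uIcc hcont
  rw [ha, hb, hcoord, hcoord] at hivt
  obtain ⟨t, ht, hts : φ (γ t - c) = s⟩ := hivt hs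
  obtain ⟨r, hr⟩ := hline t ht
  refine ⟨t, ht, ?_⟩
  rw [hr, hcoord] at hts
  rw [hr, hts]

end RealLine

namespace RatParam

variable {n : ℕ} (X : RatParam n)

lemma finite_compl_domain : X.domainᶜ.Finite := by
  have hroots : X.domainᶜ = ⋃ i, {t | (X.q i).IsRoot t} := by
    ext t
    simp [domain]
  rw [hroots]
  exact Set.finite_iUnion fun i => finite_setOfPred_isRoot (X.q_ne_zero i)

lemma curve_nonempty : X.curve.Nonempty := by
  have hdomain : X.domain.Infinite := by simpa using X.finite_compl_domain.infinite_compl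
  exact hdomain.nonempty.image X.eval

lemma continuousOn_eval : ContinuousOn X.eval X.domain :=
  (PiLp.continuous_toLp 2 _).comp_continuousOn <| continuousOn_pi.2 fun i =>
    (X.p i).continuous.continuousOn.div (X.q i).continuous.continuousOn fun _ ht => ht i

lemma exists_polynomial_eval_eq_mul_dual (φ : Module.Dual ℝ (EuclideanSpace ℝ (Fin n))) :
    ∃ P : ℝ[X], ∀ t ∈ X.domain, P.eval t = (∏ i, X.q i).eval t * φ (X.eval t) := by
  refine ⟨∑ i, C (φ (EuclideanSpace.single i 1)) * (X.p i * ∏ j ∈ Finset.univ.erase i, X.q j),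
    fun t ht => ?_⟩
  have hφ : φ (X.eval t) =
      ∑ i, (X.p i).eval t / (X.q i).eval t * φ (EuclideanSpace.single i 1) := by
    conv_lhs => rw [← (EuclideanSpace.basisFun (Fin n) ℝ).sum_repr (X.eval t)]
    simp [eval]
  rw [hφ, eval_finsetSum, Finset.mul_sum]
  refine Finset.sum_congr rfl fun i _ => ?_
  rw [← Finset.mul_prod_erase Finset.univ X.q (Finset.mem_univ i)]
  simp only [eval_mul, eval_C]
  field_simp [ht i]

lemma curve_subset_of_infinite (s : AffineSubspace ℝ (EuclideanSpace ℝ (Fin n)))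
    (hs : {t ∈ X.domain | X.eval t ∈ s}.Infinite) : X.curve ⊆ s := by
  obtain ⟨t₀, -, hc⟩ := hs.nonempty
  rintro _ ⟨t, ht, rfl⟩
  rw [SetLike.mem_coe, ← AffineSubspace.vsub_right_mem_direction_iff_mem hc,
    ← Subspace.forall_mem_dualAnnihilator_apply_eq_zero_iff]
  intro φ hφ
  obtain ⟨P, hP⟩ := X.exists_polynomial_eval_eq_mul_dual φ
  have hPD : P = C (φ (X.eval t₀)) * ∏ i, X.q i := by
    refine eq_of_infinite_eval_eq _ _ (hs.mono fun r hr => ?_)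
    have hφr : φ (X.eval r) = φ (X.eval t₀) := by
      rw [← sub_eq_zero, ← map_sub]
      exact (Submodule.mem_dualAnnihilator φ).1 hφ _ (AffineSubspace.vsub_mem_direction hr.2 hc)
    rw [Set.mem_ofPred_eq, hP r hr.1, hφr, eval_mul, eval_C, mul_comm]
  have hD : (∏ i, X.q i).eval t ≠ 0 := by
    rw [eval_prod]
    exact Finset.prod_ne_zero_iff.2 fun i _ => ht i
  have hvalue : (∏ i, X.q i).eval t * φ (X.eval t) =
      (∏ i, X.q i).eval t * φ (X.eval t₀) := by
    rw [← hP t ht, hPD, eval_mul, eval_C, mul_comm]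
  rw [vsub_eq_sub, map_sub, mul_left_cancel₀ hD hvalue, sub_self]

variable {X} {w : EuclideanSpace ℝ (Fin n)}

lemma periodic_mem_curve_of_image_add_eq (h : (· + w) '' X.curve = X.curve)
    (c : EuclideanSpace ℝ (Fin n)) :
    Function.Periodic (fun s : ℝ => c + s • w ∈ X.curve) 1 := by
  intro s
  have hshift : c + (s + 1) • w = (c + s • w) + w := by module
  simp only [eq_iff_iff, hshift]
  nth_rw 1 [← h]
  exact (add_left_injective w).mem_set_image

lemma exists_injective_eval_eq_add_int_smul (hw : w ≠ 0) (h : (· + w) '' X.curve = X.curve)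
    {c : EuclideanSpace ℝ (Fin n)} (hc : c ∈ X.curve) :
    ∃ t : ℤ → ℝ, Function.Injective t ∧ ∀ k, t k ∈ X.domain ∧ X.eval (t k) = c + (k : ℝ) • w := by
  have hmem (k : ℤ) : c + (k : ℝ) • w ∈ X.curve := by
    have hk := (periodic_mem_curve_of_image_add_eq h c).int_mul_eq k
    simpa [hc] using hk
  choose t ht using hmem
  refine ⟨t, fun j k hjk => ?_, ht⟩
  have hsmul : (j : ℝ) • w = (k : ℝ) • w := by
    rw [← add_right_inj c, ← (ht j).2, ← (ht k).2, hjk]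
  exact_mod_cast smul_left_injective ℝ hw hsmul

lemma isLine_curve_of_image_add_eq (hw : w ≠ 0) (h : (· + w) '' X.curve = X.curve) :
    IsLine X.curve := by
  obtain ⟨c, hc⟩ := X.curve_nonempty
  obtain ⟨t, ht_inj, ht⟩ := exists_injective_eval_eq_add_int_smul hw h hc
  have mem_line {x} : x ∈ AffineSubspace.mk' c (ℝ ∙ w) ↔ ∃ s : ℝ, x = c + s • w := by
    simp only [AffineSubspace.mem_mk', vsub_eq_sub, Submodule.mem_span_singleton,
      eq_sub_iff_add_eq', eq_comm]
  have hsub : X.curve ⊆ AffineSubspace.mk' c (ℝ ∙ w) :=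
    X.curve_subset_of_infinite _ <| (Set.infinite_range_of_injective ht_inj).mono <|
      Set.range_subset_iff.2 fun k => ⟨(ht k).1, mem_line.2 ⟨k, (ht k).2⟩⟩
  obtain ⟨_, ⟨j, rfl⟩, _, ⟨k, rfl⟩, hjk, hdomain⟩ :=
    exists_uIcc_subset_compl_of_infinite (Set.infinite_range_of_injective ht_inj)
      X.finite_compl_domain (Set.disjoint_compl_right_iff_subset.2
        (Set.range_subset_iff.2 fun k => (ht k).1))
  rw [compl_compl] at hdomain
  have hsegment : ∀ s ∈ Set.uIcc (j : ℝ) k, c + s • w ∈ X.curve := by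
    intro s hs
    obtain ⟨r, hr, hrs⟩ := exists_mem_uIcc_eq_add_smul hw (X.continuousOn_eval.mono hdomain)
      (fun r hr => mem_line.1 (hsub ⟨r, hdomain hr, rfl⟩)) (ht j).2 (ht k).2 hs
    exact ⟨r, hdomain hr, hrs⟩
  refine ⟨c, w, hw, Set.Subset.antisymm (fun x hx => mem_line.1 (hsub hx)) ?_⟩
  rintro _ ⟨s, rfl⟩
  exact forall_of_periodic_of_forall_mem_uIcc (periodic_mem_curve_of_image_add_eq h c)
    (ne_of_apply_ne t hjk) hsegment s

lemma commute_of_commute_linear_of_image_curve_eq (hX : ¬ IsLine X.curve)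
    {f g : EuclideanSpace ℝ (Fin n) →ᵃ[ℝ] EuclideanSpace ℝ (Fin n)}
    (hlin : Function.Commute f.linear g.linear) (hf : f '' X.curve = X.curve)
    (hg : g '' X.curve = X.curve) : Function.Commute f g := by
  set w := f (g 0) - g (f 0) with hw_def
  have map_add (k : EuclideanSpace ℝ (Fin n) →ᵃ[ℝ] EuclideanSpace ℝ (Fin n)) (x y) :
      k (x + y) = k.linear x + k y := k.map_vadd y x
  have hfg (x) : f (g x) = g (f x) + w := by
    calc f (g x) = f.linear (g.linear x) + f (g 0) := by rw [← map_add, ← map_add, add_zero]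
      _ = g.linear (f.linear x) + g (f 0) + w := by rw [hlin.eq x, hw_def]; abel
      _ = g (f x) + w := by rw [← map_add, ← map_add, add_zero]
  have hw : w = 0 := by
    by_contra hw
    refine hX (isLine_curve_of_image_add_eq hw ?_)
    calc (· + w) '' X.curve = (fun x => g (f x) + w) '' X.curve := by
          conv_lhs => rw [← hg, ← hf, Set.image_image, Set.image_image]
      _ = f '' (g '' X.curve) := by simp only [← hfg, Set.image_image]
      _ = X.curve := by rw [hg, hf]
  intro x
  rw [hfg, hw, add_zero]

end RatParam

/-- Let `C ⊆ ℝ³` be an infinite rational space curve that is not a line,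
invariant under two rotations `f₁`, `f₂` of `ℝ³` with axes `L₁`, `L₂`. If `L₁` and `L₂` are
parallel (have the same direction), then `L₁ = L₂`. -/
theorem statement_4 (X : RatParam 3) (C : Set (EuclideanSpace ℝ (Fin 3)))
    (hC : C = X.curve) (hCinf : C.Infinite) (hline : ¬ IsLine C)
    (f₁ f₂ : EuclideanSpace ℝ (Fin 3) → EuclideanSpace ℝ (Fin 3))
    (h₁ : IsRotation f₁) (h₂ : IsRotation f₂)
    (L₁ L₂ : Set (EuclideanSpace ℝ (Fin 3)))
    (hL₁ : L₁ = {x | f₁ x = x}) (hL₂ : L₂ = {x | f₂ x = x})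
    (hinv₁ : f₁ '' C = C) (hinv₂ : f₂ '' C = C)
    (hpar : ∃ (p₁ p₂ v : EuclideanSpace ℝ (Fin 3)), v ≠ 0 ∧
      L₁ = {x | ∃ s : ℝ, x = p₁ + s • v} ∧ L₂ = {x | ∃ s : ℝ, x = p₂ + s • v}) :
    L₁ = L₂ := by
  obtain ⟨p₁, p₂, v, hv, hline₁, hline₂⟩ := hpar
  obtain ⟨F₁, rfl, hdet₁⟩ := h₁.exists_affineIsometry
  obtain ⟨F₂, rfl, hdet₂⟩ := h₂.exists_affineIsometry
  subst hC hL₁ hL₂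
  have hfix₁ {u} := linearIsometry_apply_eq_self_iff (u := u) hline₁
  have hfix₂ {u} := linearIsometry_apply_eq_self_iff (u := u) hline₂
  have hv_span : ∃ s : ℝ, v = s • v := ⟨1, (one_smul ℝ v).symm⟩
  have hlin : Function.Commute F₁.linearIsometry F₂.linearIsometry :=
    commute_of_apply_eq_self_of_finrank_eq_three finrank_euclideanSpace_fin hdet₁ hdet₂ hv
      (hfix₁.2 hv_span) (hfix₂.2 hv_span)
  have hcomm : Function.Commute F₁ F₂ :=
    RatParam.commute_of_commute_linear_of_image_curve_eq (f := F₁.toAffineMap)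
      (g := F₂.toAffineMap) hline hlin hinv₁ hinv₂
  obtain ⟨-, -, q₁, hq₁⟩ := h₁
  obtain ⟨-, -, q₂, hq₂⟩ := h₂
  exact Set.Subset.antisymm
    (fun x => apply_eq_self_of_commute hcomm.symm hq₂ fun u hu => hfix₂.2 (hfix₁.1 hu))
    (fun x => apply_eq_self_of_commute hcomm hq₁ fun u hu => hfix₁.2 (hfix₂.1 hu))
end
end
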